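/- Let F be the friendship graph on 7 vertices consisting of three triangles sharing exactly one common vertex (so F has 9 edges). Then deg(P_F) = 3, where P_F ⊂ R^7 is the edge polytope of F. -/

import Mathlib

open MvPolynomial Pointwise

/-- `ρ({i,j}) = e_i + e_j` : the 0/1 (incidence) vector of an edge. -/
noncomputable def rho {N : ℕ} (e : Sym2 (Fin N)) : Fin N → ℝ :=
  fun v => if v ∈ e then 1 else 0

/-- The edge polytope of a graph on `Fin N`. -/
noncomputable def edgePolytope {N : ℕ} (G : SimpleGraph (Fin N)) : Set (Fin N → ℝ) :=
  convexHull ℝ (rho '' G.edgeSet)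

/-- Number of lattice points of the `t`-th dilation (`= 1` for `t = 0`). -/
noncomputable def ehr {N : ℕ} (P : Set (Fin N → ℝ)) (t : ℕ) : ℕ :=
  if t = 0 then 1 else Nat.card {x : Fin N → ℤ // (fun i => (x i : ℝ)) ∈ (t : ℝ) • P}

/-- The dimension of a polytope: the rank of the direction of its affine span. -/
noncomputable def polyDim {N : ℕ} (P : Set (Fin N → ℝ)) : ℕ :=
  Module.finrank ℝ (affineSpan ℝ P).direction

/-- The `i`-th coefficient of `(1-λ)^{d+1} (1 + Σ_{t≥1} |tP ∩ Z^N| λ^t)`. -/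
noncomputable def deltaCoeff {N : ℕ} (P : Set (Fin N → ℝ)) (i : ℕ) : ℤ :=
  ∑ j ∈ Finset.range (i + 1),
    (-1 : ℤ) ^ j * (Nat.choose (polyDim P + 1) j : ℤ) * (ehr P (i - j) : ℤ)

/-- The degree of the δ-polynomial of `P`. -/
noncomputable def polyDeg {N : ℕ} (P : Set (Fin N → ℝ)) : ℕ :=
  sSup {i : ℕ | deltaCoeff P i ≠ 0}

/-- The monomial `t_i t_j s` attached to an edge `{i,j}`; `s` is the variable `none`. -/
noncomputable def edgeMonom (K : Type*) [Field K] {V : Type*} (e : Sym2 V) :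
    MvPolynomial (Option V) K :=
  Sym2.lift ⟨fun i j => X (some i) * X (some j) * X none, fun i j => by ring⟩ e

/-- The edge ring `K[G]`, the subalgebra generated by the monomials `t^{ρ(e)} s`. -/
noncomputable def edgeRing (K : Type*) [Field K] {V : Type*} (G : SimpleGraph V) :
    Subalgebra K (MvPolynomial (Option V) K) :=
  Algebra.adjoin K (edgeMonom K '' G.edgeSet)

/-- The toric ideal `I_G`: kernel of `x_e ↦ t^{ρ(e)} s`. -/
noncomputable def toricIdeal (K : Type*) [Field K] {V : Type*} (G : SimpleGraph V) :
    Ideal (MvPolynomial G.edgeSet K) :=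
  RingHom.ker (MvPolynomial.aeval (fun e : G.edgeSet => edgeMonom K (e : Sym2 V)) :
    MvPolynomial G.edgeSet K →ₐ[K] MvPolynomial (Option V) K)

/-- `S/I` has a `q`-linear (minimal graded free) resolution: there is a graded free
resolution of `S/I` in which the free module at homological step `i ≥ 1` is generated
in the single degree `q + i - 1`; equivalently all Betti numbers `β_{i,j}` with
`j ≠ q + i - 1` vanish. -/
def HasLinearResolution {σ K : Type*} [Field K] (q : ℕ)
    (I : Ideal (MvPolynomial σ K)) : Prop :=
  ∃ (b : ℕ → ℕ)
    (φ₀ : (Fin (b 0) →₀ MvPolynomial σ K) →ₗ[MvPolynomial σ K] MvPolynomial σ K)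
    (φ : ∀ i : ℕ,
      (Fin (b (i + 1)) →₀ MvPolynomial σ K) →ₗ[MvPolynomial σ K]
        (Fin (b i) →₀ MvPolynomial σ K)),
    LinearMap.range φ₀ = I ∧
    LinearMap.ker φ₀ = LinearMap.range (φ 0) ∧
    (∀ i, LinearMap.ker (φ i) = LinearMap.range (φ (i + 1))) ∧
    (∀ j, (φ₀ (Finsupp.single j 1)).IsHomogeneous q) ∧
    (∀ i j k, ((φ i (Finsupp.single j 1)) k).IsHomogeneous 1)

/-!
Consider `n` triangles sharing one vertex. A lattice point of the `t`-th dilation of their edge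
polytope is determined by its coordinates at the vertices other than the common one, that is, by a
family of pairs `(aᵢ, bᵢ)` of natural numbers, one for each triangle; the remaining coordinate is
`2t - ∑ (aᵢ + bᵢ)`. The families that occur are those with
`∑ max aᵢ bᵢ ≤ t ≤ ∑ (aᵢ + bᵢ)`. Since `max a b ≤ a + b`, their number is
`#{∑ max aᵢ bᵢ ≤ t} - #{∑ (aᵢ + bᵢ) < t}`. The pairs have generating function
`(1 + X) / (1 - X)²` with respect to `max a b` and `1 / (1 - X)²` with respect to `a + b`, so the
Ehrhart series is `((1 + X)ⁿ - X) / (1 - X)²ⁿ⁺¹`. The polytope has dimension `2n`, so its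
δ-polynomial is `(1 + X)ⁿ - X`, of degree `n` for `n ≥ 2`.
-/

theorem ncard_preimage_eq_sum_ncard_fiber {α β : Type*} {f : α → β}
    (hf : ∀ b, (f ⁻¹' {b}).Finite) (s : Finset β) :
    (f ⁻¹' (s : Set β)).ncard = ∑ b ∈ s, (f ⁻¹' {b}).ncard := by
  classical
  have hfin : (f ⁻¹' (s : Set β)).Finite := s.finite_toSet.preimage' fun b _ => hf b
  have hmaps : Set.MapsTo f (hfin.toFinset : Set α) s := fun a ha => by simpa using ha
  rw [Set.ncard_eq_toFinset_card _ hfin, Finset.card_eq_sum_card_fiberwise hmaps]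
  refine Finset.sum_congr rfl fun b hb => ?_
  rw [← Set.ncard_coe_finset]
  congr 1
  ext a
  simp only [Finset.coe_filter, Set.Finite.mem_toFinset, Set.mem_preimage, Set.mem_ofPred_eq,
    Set.mem_singleton_iff, and_iff_right_iff_imp, Finset.mem_coe]
  rintro rfl
  exact hb

theorem ncard_univ_pi {ι : Type*} [Fintype ι] {α : ι → Type*} (s : ∀ i, Set (α i)) :
    (Set.univ.pi s).ncard = ∏ i, (s i).ncard := by
  simp only [← Nat.card_coe_set_eq, Nat.card_congr (Equiv.Set.univPi s), Nat.card_pi]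

/-- The generating function `∑ₙ #{a | w a = n} Xⁿ` of a weight `w`. It is meaningful for weights
with finite fibres only, as `Set.ncard` is `0` on infinite sets. -/
noncomputable def weightSeries {α : Type*} (w : α → ℕ) : PowerSeries ℤ :=
  PowerSeries.mk fun n => ((w ⁻¹' {n}).ncard : ℤ)

/-- The vector of the weights of the components of a tuple, finitely supported so as to match the
index type of `PowerSeries.coeff_prod`. -/
noncomputable def multiWeight {ι : Type*} [Finite ι] {α : ι → Type*} (w : ∀ i, α i → ℕ)
    (p : ∀ i, α i) : ι →₀ ℕ :=
  Finsupp.equivFunOnFinite.symm fun i => w i (p i)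

theorem preimage_multiWeight_singleton {ι : Type*} [Finite ι] {α : ι → Type*} (w : ∀ i, α i → ℕ)
    (l : ι →₀ ℕ) : multiWeight w ⁻¹' {l} = Set.univ.pi fun i => w i ⁻¹' {l i} := by
  ext p
  simp [multiWeight, Finsupp.ext_iff]

theorem finite_preimage_multiWeight_singleton {ι : Type*} [Finite ι] {α : ι → Type*}
    {w : ∀ i, α i → ℕ} (hw : ∀ i n, (w i ⁻¹' {n}).Finite) (l : ι →₀ ℕ) :
    (multiWeight w ⁻¹' {l}).Finite := by
  rw [preimage_multiWeight_singleton]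
  exact Set.Finite.pi fun i => hw i (l i)

section Pi

variable {ι : Type*} [Fintype ι] {α : ι → Type*} {w : ∀ i, α i → ℕ}

theorem preimage_sum_weight_singleton [DecidableEq ι] (n : ℕ) :
    (fun p : ∀ i, α i => ∑ i, w i (p i)) ⁻¹' {n} =
      multiWeight w ⁻¹' (Finset.univ.finsuppAntidiag n : Finset (ι →₀ ℕ)) := by
  ext p
  simp [multiWeight]

theorem finite_preimage_sum_weight_singleton (hw : ∀ i n, (w i ⁻¹' {n}).Finite) (n : ℕ) :
    ((fun p : ∀ i, α i => ∑ i, w i (p i)) ⁻¹' {n}).Finite := by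
  classical
  rw [preimage_sum_weight_singleton]
  exact (Finset.finite_toSet _).preimage' fun l _ => finite_preimage_multiWeight_singleton hw l

theorem weightSeries_pi (hw : ∀ i n, (w i ⁻¹' {n}).Finite) :
    weightSeries (fun p : ∀ i, α i => ∑ i, w i (p i)) = ∏ i, weightSeries (w i) := by
  classical
  ext n
  simp only [weightSeries, PowerSeries.coeff_prod, PowerSeries.coeff_mk]
  rw [preimage_sum_weight_singleton,
    ncard_preimage_eq_sum_ncard_fiber (finite_preimage_multiWeight_singleton hw)]
  simp only [preimage_multiWeight_singleton, ncard_univ_pi, Nat.cast_sum, Nat.cast_prod]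

end Pi

section Cumulative

variable {α : Type*} {w u : α → ℕ}

theorem mk_ncard_preimage_Iic_mul_one_sub_X (hw : ∀ n, (w ⁻¹' {n}).Finite) :
    (PowerSeries.mk fun t => ((w ⁻¹' Set.Iic t).ncard : ℤ)) * (1 - PowerSeries.X) =
      weightSeries w := by
  have h : (PowerSeries.mk fun t => ((w ⁻¹' Set.Iic t).ncard : ℤ)) =
      weightSeries w * PowerSeries.mk 1 := by
    ext t
    rw [PowerSeries.coeff_mul, Finset.Nat.sum_antidiagonal_eq_sum_range_succ_mk]
    simp only [weightSeries, PowerSeries.coeff_mk, Pi.one_apply, mul_one]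
    rw [← Nat.cast_sum, ← ncard_preimage_eq_sum_ncard_fiber hw, Finset.coe_range]
    exact congrArg (fun s => ((w ⁻¹' s).ncard : ℤ)) (Set.Iio_succ_eq_Iic t).symm
  rw [h, mul_assoc, PowerSeries.mk_one_mul_one_sub_eq_one, mul_one]

theorem mk_ncard_preimage_Iio :
    (PowerSeries.mk fun t => ((w ⁻¹' Set.Iio t).ncard : ℤ)) =
      PowerSeries.X * PowerSeries.mk fun t => ((w ⁻¹' Set.Iic t).ncard : ℤ) := by
  ext t
  cases t with
  | zero => simp
  | succ t =>
    simp only [PowerSeries.coeff_mk, PowerSeries.coeff_succ_X_mul]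
    exact congrArg (fun s => ((w ⁻¹' s).ncard : ℤ)) (Set.Iio_succ_eq_Iic t)

theorem ncard_le_and_le_add_ncard_lt (hw : ∀ n, (w ⁻¹' {n}).Finite) (hwu : w ≤ u) (t : ℕ) :
    {a | w a ≤ t ∧ t ≤ u a}.ncard + (u ⁻¹' Set.Iio t).ncard = (w ⁻¹' Set.Iic t).ncard := by
  have hfin : (w ⁻¹' Set.Iic t).Finite := (Set.finite_Iic t).preimage' fun n _ => hw n
  have hsub : u ⁻¹' Set.Iio t ⊆ w ⁻¹' Set.Iic t := fun a ha => (hwu a).trans (le_of_lt ha)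
  rw [← Set.ncard_sdiff_add_ncard_of_subset hsub hfin]
  congr 2
  ext a
  simp

theorem mk_ncard_preimage_Iic_sum_mul_one_sub_X_pow (ι : Type*) [Fintype ι] {k : ℕ}
    {q : PowerSeries ℤ} (hw : ∀ n, (w ⁻¹' {n}).Finite)
    (hq : weightSeries w * (1 - PowerSeries.X) ^ k = q) :
    (PowerSeries.mk fun t => (((fun p : ι → α => ∑ i, w (p i)) ⁻¹' Set.Iic t).ncard : ℤ)) *
      (1 - PowerSeries.X) ^ (Fintype.card ι * k + 1) = q ^ Fintype.card ι := by
  rw [pow_succ', ← mul_assoc,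
    mk_ncard_preimage_Iic_mul_one_sub_X (finite_preimage_sum_weight_singleton fun _ => hw),
    weightSeries_pi fun _ => hw, Finset.prod_const, Finset.card_univ, mul_comm (Fintype.card ι) k,
    pow_mul, ← mul_pow, hq]

end Cumulative

theorem preimage_pair_add_singleton (n : ℕ) :
    (fun p : ℕ × ℕ => p.1 + p.2) ⁻¹' {n} =
      (Finset.HasAntidiagonal.antidiagonal n : Finset (ℕ × ℕ)) := by
  ext p
  simp

theorem finite_preimage_pair_add_singleton (n : ℕ) :
    ((fun p : ℕ × ℕ => p.1 + p.2) ⁻¹' {n}).Finite :=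
  preimage_pair_add_singleton n ▸ Finset.finite_toSet _

theorem weightSeries_pair_add_mul_one_sub_X_sq :
    weightSeries (fun p : ℕ × ℕ => p.1 + p.2) * (1 - PowerSeries.X) ^ 2 = 1 := by
  have h : weightSeries (fun p : ℕ × ℕ => p.1 + p.2) =
      PowerSeries.mk fun n => ((1 + n).choose 1 : ℤ) := by
    ext n
    simp only [weightSeries, PowerSeries.coeff_mk, preimage_pair_add_singleton,
      Set.ncard_coe_finset, Finset.Nat.card_antidiagonal, Nat.choose_one_right, add_comm]
  rw [h, PowerSeries.mk_add_choose_mul_one_sub_pow_eq_one ℤ 1]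

theorem preimage_pair_max_singleton (n : ℕ) :
    (fun p : ℕ × ℕ => max p.1 p.2) ⁻¹' {n} =
      (Finset.range (n + 1) ×ˢ Finset.range (n + 1) \ Finset.range n ×ˢ Finset.range n :
        Finset (ℕ × ℕ)) := by
  ext p
  simp only [Set.mem_preimage, Set.mem_singleton_iff, SetLike.mem_coe, Finset.mem_sdiff,
    Finset.mem_product, Finset.mem_range]
  omega

theorem finite_preimage_pair_max_singleton (n : ℕ) :
    ((fun p : ℕ × ℕ => max p.1 p.2) ⁻¹' {n}).Finite :=
  preimage_pair_max_singleton n ▸ Finset.finite_toSet _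

theorem ncard_preimage_pair_max_singleton (n : ℕ) :
    ((fun p : ℕ × ℕ => max p.1 p.2) ⁻¹' {n}).ncard = 2 * n + 1 := by
  have hsub : Finset.range n ×ˢ Finset.range n ⊆ Finset.range (n + 1) ×ˢ Finset.range (n + 1) := by
    gcongr <;> exact n.le_succ
  rw [preimage_pair_max_singleton, Set.ncard_coe_finset, Finset.card_sdiff_of_subset hsub,
    Finset.card_product, Finset.card_product, Finset.card_range, Finset.card_range]
  grind

theorem weightSeries_pair_max_mul_one_sub_X_sq :
    weightSeries (fun p : ℕ × ℕ => max p.1 p.2) * (1 - PowerSeries.X) ^ 2 =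
      1 + PowerSeries.X := by
  have h : weightSeries (fun p : ℕ × ℕ => max p.1 p.2) =
      (1 + PowerSeries.X) * PowerSeries.mk fun n => ((1 + n).choose 1 : ℤ) := by
    ext n
    cases n with
    | zero => simp [weightSeries, ncard_preimage_pair_max_singleton]
    | succ n =>
      simp only [weightSeries, PowerSeries.coeff_mk, ncard_preimage_pair_max_singleton, add_mul,
        one_mul, map_add, PowerSeries.coeff_succ_X_mul, Nat.choose_one_right]
      push_cast
      ring
  rw [h, mul_assoc, PowerSeries.mk_add_choose_mul_one_sub_pow_eq_one ℤ 1, mul_one]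

theorem coeff_one_sub_X_pow (R : Type*) [CommRing R] (d n : ℕ) :
    PowerSeries.coeff n ((1 - PowerSeries.X) ^ d) = ((-1) ^ n * d.choose n : R) := by
  have h : (1 - PowerSeries.X : PowerSeries R) ^ d =
      PowerSeries.rescale (-1 : R) (((1 + Polynomial.X) ^ d : Polynomial R) : PowerSeries R) := by
    simp [PowerSeries.rescale_X, sub_eq_add_neg]
  rw [h, PowerSeries.coeff_rescale, Polynomial.coeff_coe, Polynomial.coeff_one_add_X_pow]

theorem deltaCoeff_eq_coeff {N : ℕ} (P : Set (Fin N → ℝ)) (i : ℕ) :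
    deltaCoeff P i = PowerSeries.coeff i
      ((1 - PowerSeries.X) ^ (polyDim P + 1) * PowerSeries.mk fun t => (ehr P t : ℤ)) := by
  rw [PowerSeries.coeff_mul, Finset.Nat.sum_antidiagonal_eq_sum_range_succ_mk, deltaCoeff]
  simp only [coeff_one_sub_X_pow, PowerSeries.coeff_mk]

theorem polyDeg_eq_natDegree {N : ℕ} {P : Set (Fin N → ℝ)} {d : ℕ} {q : Polynomial ℤ}
    (hd : polyDim P = d)
    (h : (PowerSeries.mk fun t => (ehr P t : ℤ)) * (1 - PowerSeries.X) ^ (d + 1) =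
      (q : PowerSeries ℤ)) :
    polyDeg P = q.natDegree := by
  have hcoeff (i : ℕ) : deltaCoeff P i = q.coeff i := by
    rw [deltaCoeff_eq_coeff, hd, mul_comm, h, Polynomial.coeff_coe]
  simp only [polyDeg, hcoeff]
  obtain rfl | hq := eq_or_ne q 0
  · simp
  · exact IsGreatest.csSup_eq ⟨Polynomial.leadingCoeff_ne_zero.mpr hq,
      fun i hi => Polynomial.le_natDegree_of_ne_zero hi⟩

theorem rho_mk {N : ℕ} {a b : Fin N} (hab : a ≠ b) :
    rho s(a, b) = Pi.single a 1 + Pi.single b 1 := by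
  ext v
  simp only [rho, Sym2.mem_iff, Pi.add_apply, Pi.single_apply]
  by_cases ha : v = a
  · simp [ha, hab]
  · simp [ha]

theorem sum_rho {N : ℕ} {e : Sym2 (Fin N)} (he : ¬ e.IsDiag) : ∑ v, rho e v = 2 := by
  induction e with
  | _ a b =>
    simp only [rho_mk he, Pi.add_apply, Finset.sum_add_distrib, Finset.sum_pi_single']
    norm_num

theorem polyDim_convexHull_of_sum_eq {N : ℕ} {s : Set (Fin (N + 1) → ℝ)} {c : ℝ}
    (hsum : ∀ x ∈ s, ∑ v, x v = c)
    (hdiff : ∀ v, Pi.single v 1 - Pi.single 0 1 ∈ vectorSpan ℝ s) :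
    polyDim (convexHull ℝ s) = N := by
  let φ : Module.Dual ℝ (Fin (N + 1) → ℝ) := ∑ v, LinearMap.proj v
  have hφ (x : Fin (N + 1) → ℝ) : φ x = ∑ v, x v := by simp [φ]
  have hspan : vectorSpan ℝ s = LinearMap.ker φ := by
    apply le_antisymm
    · rw [vectorSpan_def, Submodule.span_le]
      rintro _ ⟨x, hx, y, hy, rfl⟩
      simp [hφ, hsum x hx, hsum y hy]
    · intro x hx
      rw [LinearMap.mem_ker, hφ] at hx
      have hx' : x = ∑ v, x v • (Pi.single v 1 - Pi.single 0 1 : Fin (N + 1) → ℝ) := by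
        simp only [smul_sub, Finset.sum_sub_distrib, ← Finset.sum_smul, hx, zero_smul, sub_zero]
        exact pi_eq_sum_univ' x
      rw [hx']
      exact Submodule.sum_mem _ fun v _ => Submodule.smul_mem _ _ (hdiff v)
  have hφ0 : φ ≠ 0 := fun h => by simpa [hφ] using LinearMap.congr_fun h (Pi.single 0 1)
  have hrank := Module.Dual.finrank_ker_add_one_of_ne_zero hφ0
  rw [Module.finrank_fin_fun] at hrank
  rw [polyDim, affineSpan_convexHull, direction_affineSpan, hspan]
  exact Nat.succ_injective hrank


theorem natDegree_one_add_X_pow_sub_X {n : ℕ} (hn : 2 ≤ n) :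
    ((1 + Polynomial.X) ^ n - Polynomial.X : Polynomial ℤ).natDegree = n := by
  have hdeg : ((1 + Polynomial.X) ^ n : Polynomial ℤ).natDegree = n := by
    rw [Polynomial.natDegree_pow, add_comm, ← Polynomial.C_1, Polynomial.natDegree_X_add_C, mul_one]
  rw [Polynomial.natDegree_sub_eq_left_of_natDegree_lt, hdeg]
  rwa [hdeg, Polynomial.natDegree_X]

theorem convexOn_finset_sum {𝕜 E β ι : Type*} [Semiring 𝕜] [PartialOrder 𝕜] [AddCommMonoid E]
    [SMul 𝕜 E] [AddCommMonoid β] [PartialOrder β] [IsOrderedAddMonoid β] [DistribSMul 𝕜 β]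
    {s : Set E} (hs : Convex 𝕜 s) {f : ι → E → β} {I : Finset ι}
    (hf : ∀ i ∈ I, ConvexOn 𝕜 s (f i)) : ConvexOn 𝕜 s fun x => ∑ i ∈ I, f i x := by
  refine ⟨hs, fun x hx y hy a b ha hb hab => ?_⟩
  simp only [Finset.smul_sum, ← Finset.sum_add_distrib]
  exact Finset.sum_le_sum fun i hi => (hf i hi).2 hx hy ha hb hab

/-- The vertex `2i + b + 1` of the friendship graph: the end number `b` of the edge of the `i`-th
triangle that avoids the common vertex `0`. -/
def outer {n : ℕ} (i : Fin n) (b : Fin 2) : Fin (n * 2 + 1) :=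
  (finProdFinEquiv (i, b)).succ

/-- The three edges of the `i`-th triangle of the friendship graph. -/
def triangleEdge {n : ℕ} (i : Fin n) : Fin 3 → Sym2 (Fin (n * 2 + 1)) :=
  ![s(0, outer i 0), s(0, outer i 1), s(outer i 0, outer i 1)]

/-- The friendship graph: `n` triangles sharing exactly the vertex `0`. -/
def friendshipGraph (n : ℕ) : SimpleGraph (Fin (n * 2 + 1)) :=
  SimpleGraph.fromEdgeSet (Set.range fun p : Fin n × Fin 3 => triangleEdge p.1 p.2)

section FriendshipGraph

variable {n : ℕ}

theorem outer_ne_zero (i : Fin n) (b : Fin 2) : outer i b ≠ 0 :=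
  Fin.succ_ne_zero _

theorem outer_inj {i j : Fin n} {b c : Fin 2} : outer i b = outer j c ↔ i = j ∧ b = c := by
  rw [outer, outer, Fin.succ_inj, finProdFinEquiv.apply_eq_iff_eq, Prod.mk_inj]

theorem outer_zero_ne_outer_one (i : Fin n) : outer i 0 ≠ outer i 1 := by
  simp [outer_inj]

theorem forall_vertex {p : Fin (n * 2 + 1) → Prop} :
    (∀ v, p v) ↔ p 0 ∧ ∀ i : Fin n, p (outer i 0) ∧ p (outer i 1) := by
  simp only [Fin.forall_fin_succ (P := p), ← finProdFinEquiv.forall_congr_right, Prod.forall,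
    Fin.forall_fin_two, outer]

theorem sum_vertex {M : Type*} [AddCommMonoid M] (f : Fin (n * 2 + 1) → M) :
    ∑ v, f v = f 0 + ∑ i : Fin n, (f (outer i 0) + f (outer i 1)) := by
  simp only [Fin.sum_univ_succ f, ← finProdFinEquiv.sum_comp, Fintype.sum_prod_type,
    Fin.sum_univ_two, outer]

theorem rho_triangleEdge_zero (i : Fin n) :
    rho (triangleEdge i 0) = Pi.single 0 1 + Pi.single (outer i 0) 1 :=
  rho_mk (outer_ne_zero i 0).symm

theorem rho_triangleEdge_one (i : Fin n) :
    rho (triangleEdge i 1) = Pi.single 0 1 + Pi.single (outer i 1) 1 :=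
  rho_mk (outer_ne_zero i 1).symm

theorem rho_triangleEdge_two (i : Fin n) :
    rho (triangleEdge i 2) = Pi.single (outer i 0) 1 + Pi.single (outer i 1) 1 :=
  rho_mk (outer_zero_ne_outer_one i)

theorem not_isDiag_triangleEdge (i : Fin n) (k : Fin 3) : ¬ (triangleEdge i k).IsDiag := by
  fin_cases k
  · exact (outer_ne_zero i 0).symm
  · exact (outer_ne_zero i 1).symm
  · exact outer_zero_ne_outer_one i

theorem edgeSet_friendshipGraph :
    (friendshipGraph n).edgeSet = Set.range fun p : Fin n × Fin 3 => triangleEdge p.1 p.2 := by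
  rw [friendshipGraph, SimpleGraph.edgeSet_fromEdgeSet, sdiff_eq_left, Set.disjoint_left]
  rintro _ ⟨p, rfl⟩
  exact not_isDiag_triangleEdge p.1 p.2

theorem edgeSet_friendshipGraph_three : (friendshipGraph 3).edgeSet =
    ({s((0 : Fin 7), 1), s((0 : Fin 7), 2), s((1 : Fin 7), 2),
      s((0 : Fin 7), 3), s((0 : Fin 7), 4), s((3 : Fin 7), 4),
      s((0 : Fin 7), 5), s((0 : Fin 7), 6), s((5 : Fin 7), 6)} : Set (Sym2 (Fin 7))) := by
  rw [edgeSet_friendshipGraph]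
  ext e
  simp [Fin.exists_fin_succ, triangleEdge, outer, finProdFinEquiv, or_assoc, eq_comm (b := e)]

theorem triangleEdge_mem_edgeSet (i : Fin n) (k : Fin 3) :
    triangleEdge i k ∈ (friendshipGraph n).edgeSet :=
  edgeSet_friendshipGraph ▸ ⟨(i, k), rfl⟩

/-- The points of the `t`-th dilation of the edge polytope of the friendship graph, described by
inequalities and over any ordered ring of coordinates, so as to cover real and lattice points. -/
def friendshipRegion (n : ℕ) {R : Type*} [CommRing R] [LinearOrder R] (t : R) :
    Set (Fin (n * 2 + 1) → R) :=
  {y | (∀ v, 0 ≤ y v) ∧ ∑ v, y v = 2 * t ∧ y 0 ≤ t ∧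
    ∑ i : Fin n, max (y (outer i 0)) (y (outer i 1)) ≤ t}

theorem convex_friendshipRegion (t : ℝ) : Convex ℝ (friendshipRegion n t) := by
  have hsum : IsLinearMap ℝ fun y : Fin (n * 2 + 1) → ℝ => ∑ v, y v :=
    ⟨fun x y => Finset.sum_add_distrib, fun c x => (Finset.mul_sum _ _ _).symm⟩
  have hconvex (v : Fin (n * 2 + 1)) : ConvexOn ℝ Set.univ fun y : Fin (n * 2 + 1) → ℝ => y v :=
    (LinearMap.proj v).convexOn convex_univ
  have hmax : ConvexOn ℝ Set.univ fun y : Fin (n * 2 + 1) → ℝ =>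
      ∑ i : Fin n, max (y (outer i 0)) (y (outer i 1)) :=
    convexOn_finset_sum convex_univ fun i _ => (hconvex _).sup (hconvex _)
  have hinter : friendshipRegion n t = Set.Ici 0 ∩ ({y | ∑ v, y v = 2 * t} ∩
      ({y ∈ Set.univ | y 0 ≤ t} ∩
        {y ∈ Set.univ | ∑ i : Fin n, max (y (outer i 0)) (y (outer i 1)) ≤ t})) := by
    ext y
    simp [friendshipRegion, Pi.le_def]
  rw [hinter]
  exact (convex_Ici 0).inter <| (convex_hyperplane hsum _).inter <|
    ((hconvex 0).convex_le t).inter (hmax.convex_le t)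

theorem rho_triangleEdge_mem_friendshipRegion (i : Fin n) (k : Fin 3) :
    rho (triangleEdge i k) ∈ friendshipRegion n (1 : ℝ) := by
  have hmax (j : Fin n) : max (rho (triangleEdge i k) (outer j 0))
      (rho (triangleEdge i k) (outer j 1)) = if j = i then 1 else 0 := by
    obtain rfl | hj := eq_or_ne j i <;> fin_cases k <;>
      simp [rho_triangleEdge_zero, rho_triangleEdge_one, rho_triangleEdge_two, outer_inj,
        outer_ne_zero, *]
  refine ⟨fun v => ?_, ?_, ?_, ?_⟩
  · rw [rho]
    split_ifs <;> norm_num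
  · rw [sum_rho (not_isDiag_triangleEdge i k), mul_one]
  · rw [rho]
    split_ifs <;> norm_num
  · simp [hmax]

theorem exists_mul_eq_of_le {K : Type*} [Field K] [LinearOrder K] [IsStrictOrderedRing K] {a b : K}
    (ha : 0 ≤ a) (hab : a ≤ b) : ∃ c, 0 ≤ c ∧ c ≤ 1 ∧ c * b = a := by
  obtain rfl | hb := (ha.trans hab).eq_or_lt
  · exact ⟨0, le_rfl, zero_le_one, by linarith⟩
  · exact ⟨a / b, by positivity, div_le_one_of_le₀ hab hb.le, div_mul_cancel₀ a hb.ne'⟩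

theorem mem_edgePolytope_friendshipGraph {y : Fin (n * 2 + 1) → ℝ} {m : Fin n → ℝ}
    (hm : ∀ i, 0 ≤ m i) (hm₀ : ∀ i, m i ≤ y (outer i 0)) (hm₁ : ∀ i, m i ≤ y (outer i 1))
    (hsum : ∑ v, y v = 2) (hzero : y 0 + ∑ i, m i = 1) :
    y ∈ edgePolytope (friendshipGraph n) := by
  -- `m i` is the weight of the edge avoiding `0`; the weights of the other two are then forced.
  let w (p : Fin n × Fin 3) : ℝ :=
    ![y (outer p.1 0) - m p.1, y (outer p.1 1) - m p.1, m p.1] p.2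
  have hw_nonneg (p : Fin n × Fin 3) : 0 ≤ w p := by
    obtain ⟨i, k⟩ := p
    fin_cases k
    exacts [sub_nonneg.mpr (hm₀ i), sub_nonneg.mpr (hm₁ i), hm i]
  rw [sum_vertex] at hsum
  have hw_sum : ∑ p, w p = 1 := by
    have hterm (i : Fin n) : ∑ k, w (i, k) = y (outer i 0) + y (outer i 1) - m i := by
      rw [Fin.sum_univ_three]
      simp only [w, Matrix.cons_val]
      ring
    simp only [Fintype.sum_prod_type, hterm, Finset.sum_sub_distrib]
    linarith
  have hw_rho : ∑ p, w p • rho (triangleEdge p.1 p.2) = y := by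
    have hterm (i : Fin n) : ∑ k, w (i, k) • rho (triangleEdge i k) =
        (y (outer i 0) + y (outer i 1) - 2 * m i) • Pi.single 0 1 +
          (y (outer i 0) • Pi.single (outer i 0) 1 + y (outer i 1) • Pi.single (outer i 1) 1) := by
      rw [Fin.sum_univ_three, rho_triangleEdge_zero, rho_triangleEdge_one, rho_triangleEdge_two]
      simp only [w, Matrix.cons_val]
      module
    have hcoeff : ∑ i, (y (outer i 0) + y (outer i 1) - 2 * m i) = y 0 := by
      rw [Finset.sum_sub_distrib, ← Finset.mul_sum]
      linarith
    simp only [Fintype.sum_prod_type, hterm]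
    rw [Finset.sum_add_distrib, ← Finset.sum_smul, hcoeff,
      ← sum_vertex fun v => y v • (Pi.single v 1 : Fin (n * 2 + 1) → ℝ), ← pi_eq_sum_univ' y]
  rw [← hw_rho]
  exact (convex_convexHull ℝ _).sum_mem (fun p _ => hw_nonneg p) hw_sum fun p _ =>
    subset_convexHull ℝ _ ⟨_, triangleEdge_mem_edgeSet p.1 p.2, rfl⟩

theorem friendshipRegion_one_subset_edgePolytope :
    friendshipRegion n (1 : ℝ) ⊆ edgePolytope (friendshipGraph n) := by
  rintro y ⟨hnonneg, hsum, hzero, hmax⟩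
  let m (i : Fin n) : ℝ := min (y (outer i 0)) (y (outer i 1))
  have hm (i : Fin n) : 0 ≤ m i := le_min (hnonneg _) (hnonneg _)
  have hsplit : ∑ i : Fin n, (y (outer i 0) + y (outer i 1)) =
      ∑ i, m i + ∑ i : Fin n, max (y (outer i 0)) (y (outer i 1)) := by
    simp only [m, ← Finset.sum_add_distrib, min_add_max]
  -- The edges avoiding `0` must have total weight `1 - y 0`, which lies between `0` and `∑ i, m i`.
  obtain ⟨c, hc0, hc1, hc⟩ : ∃ c, 0 ≤ c ∧ c ≤ 1 ∧ c * ∑ i, m i = 1 - y 0 := by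
    have hsum' := sum_vertex y
    exact exists_mul_eq_of_le (by linarith) (by linarith)
  have hcm (i : Fin n) : c * m i ≤ m i := mul_le_of_le_one_left (hm i) hc1
  refine mem_edgePolytope_friendshipGraph (fun i => mul_nonneg hc0 (hm i))
    (fun i => (hcm i).trans (min_le_left _ _)) (fun i => (hcm i).trans (min_le_right _ _))
    (hsum.trans (mul_one 2)) ?_
  rw [← Finset.mul_sum, hc, add_sub_cancel]

theorem edgePolytope_friendshipGraph :
    edgePolytope (friendshipGraph n) = friendshipRegion n (1 : ℝ) := by
  refine (convexHull_min ?_ (convex_friendshipRegion 1)).antisymm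
    friendshipRegion_one_subset_edgePolytope
  rw [edgeSet_friendshipGraph]
  rintro _ ⟨_, ⟨p, rfl⟩, rfl⟩
  exact rho_triangleEdge_mem_friendshipRegion p.1 p.2

theorem smul_edgePolytope_friendshipGraph {t : ℝ} (ht : 0 < t) :
    t • edgePolytope (friendshipGraph n) = friendshipRegion n t := by
  ext y
  rw [Set.mem_smul_set_iff_inv_smul_mem₀ ht.ne', edgePolytope_friendshipGraph]
  have ht' : 0 < t⁻¹ := inv_pos.mpr ht
  simp only [friendshipRegion, Set.mem_ofPred_eq, Pi.smul_apply, smul_eq_mul,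
    ← mul_max_of_nonneg _ _ ht'.le, ← Finset.mul_sum, mul_nonneg_iff_of_pos_left ht',
    inv_mul_eq_iff_eq_mul₀ ht.ne', inv_mul_le_iff₀ ht, mul_comm t, mul_one, one_mul]

theorem intCast_mem_friendshipRegion {x : Fin (n * 2 + 1) → ℤ} {t : ℤ} :
    (fun v => (x v : ℝ)) ∈ friendshipRegion n (t : ℝ) ↔ x ∈ friendshipRegion n t := by
  simp only [friendshipRegion, Set.mem_ofPred_eq]
  norm_cast

theorem polyDim_edgePolytope_friendshipGraph :
    polyDim (edgePolytope (friendshipGraph n)) = n * 2 := by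
  have hdiff (i : Fin n) (k l : Fin 3) : rho (triangleEdge i k) - rho (triangleEdge i l) ∈
      vectorSpan ℝ (rho '' (friendshipGraph n).edgeSet) :=
    vsub_mem_vectorSpan ℝ ⟨_, triangleEdge_mem_edgeSet i k, rfl⟩
      ⟨_, triangleEdge_mem_edgeSet i l, rfl⟩
  refine polyDim_convexHull_of_sum_eq (c := 2) ?_ (forall_vertex.mpr ⟨by simp, fun i => ⟨?_, ?_⟩⟩)
  · rintro _ ⟨e, he, rfl⟩
    exact sum_rho ((friendshipGraph n).not_isDiag_of_mem_edgeSet he)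
  · convert hdiff i 2 1 using 1
    rw [rho_triangleEdge_one, rho_triangleEdge_two]
    abel
  · convert hdiff i 2 0 using 1
    rw [rho_triangleEdge_zero, rho_triangleEdge_two]
    abel

/-- The point with the entries of `p i` at `outer i 0` and `outer i 1` and with coordinate sum
`2 * t`. -/
def latticePoint (t : ℕ) (p : Fin n → ℕ × ℕ) : Fin (n * 2 + 1) → ℤ :=
  Fin.cons (2 * t - ∑ i, ((p i).1 + (p i).2 : ℤ)) fun k =>
    ![((p (finProdFinEquiv.symm k).1).1 : ℤ), (p (finProdFinEquiv.symm k).1).2]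
      (finProdFinEquiv.symm k).2

theorem latticePoint_zero (t : ℕ) (p : Fin n → ℕ × ℕ) :
    latticePoint t p 0 = 2 * t - ∑ i, ((p i).1 + (p i).2 : ℤ) :=
  rfl

theorem latticePoint_outer_zero (t : ℕ) (p : Fin n → ℕ × ℕ) (i : Fin n) :
    latticePoint t p (outer i 0) = (p i).1 := by
  simp only [latticePoint, outer, Fin.cons_succ, Equiv.symm_apply_apply, Matrix.cons_val]

theorem latticePoint_outer_one (t : ℕ) (p : Fin n → ℕ × ℕ) (i : Fin n) :
    latticePoint t p (outer i 1) = (p i).2 := by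
  simp only [latticePoint, outer, Fin.cons_succ, Equiv.symm_apply_apply, Matrix.cons_val]

theorem latticePoint_injective (t : ℕ) :
    Function.Injective (latticePoint t : (Fin n → ℕ × ℕ) → Fin (n * 2 + 1) → ℤ) := by
  intro p p' h
  ext i
  · simpa [latticePoint_outer_zero] using congrFun h (outer i 0)
  · simpa [latticePoint_outer_one] using congrFun h (outer i 1)

/-- The families of pairs `p` for which `latticePoint t p` lies in the `t`-th dilation of the edge
polytope: the lower bound on `∑ i, (p i).1 + (p i).2` says that the coordinate at the common vertex
is at most `t`, and the bound on the sum of the maxima forces that coordinate to be nonnegative. -/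
def latticeRegion (n t : ℕ) : Set (Fin n → ℕ × ℕ) :=
  {p | ∑ i, max (p i).1 (p i).2 ≤ t ∧ t ≤ ∑ i, ((p i).1 + (p i).2)}

theorem latticePoint_mem_friendshipRegion {t : ℕ} {p : Fin n → ℕ × ℕ} :
    latticePoint t p ∈ friendshipRegion n (t : ℤ) ↔ p ∈ latticeRegion n t := by
  have hsum : ∑ v, latticePoint t p v = 2 * t := by
    simp only [sum_vertex, latticePoint_zero, latticePoint_outer_zero, latticePoint_outer_one,
      sub_add_cancel]
  have hle : ∑ i, ((p i).1 + (p i).2) ≤ 2 * ∑ i, max (p i).1 (p i).2 := by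
    rw [Finset.mul_sum]
    exact Finset.sum_le_sum fun i _ => by omega
  simp only [friendshipRegion, latticeRegion, Set.mem_ofPred_eq, hsum, forall_vertex,
    latticePoint_zero, latticePoint_outer_zero, latticePoint_outer_one, Nat.cast_nonneg, and_self,
    implies_true, and_true, true_and, ← Nat.cast_add, ← Nat.cast_max, ← Nat.cast_sum]
  omega

theorem exists_latticePoint_eq {t : ℕ} {x : Fin (n * 2 + 1) → ℤ}
    (hx : x ∈ friendshipRegion n (t : ℤ)) : ∃ p, latticePoint t p = x := by
  obtain ⟨hnonneg, hsum, -, -⟩ := hx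
  refine ⟨fun i => ((x (outer i 0)).toNat, (x (outer i 1)).toNat), funext ?_⟩
  rw [sum_vertex] at hsum
  simp only [forall_vertex, latticePoint_zero, latticePoint_outer_zero, latticePoint_outer_one,
    Int.toNat_of_nonneg (hnonneg _), and_self, implies_true, and_true]
  linarith

theorem image_latticePoint_latticeRegion (t : ℕ) :
    latticePoint t '' latticeRegion n t = friendshipRegion n (t : ℤ) := by
  ext x
  constructor
  · rintro ⟨p, hp, rfl⟩
    exact latticePoint_mem_friendshipRegion.mpr hp
  · intro hx
    obtain ⟨p, rfl⟩ := exists_latticePoint_eq hx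
    exact ⟨p, latticePoint_mem_friendshipRegion.mp hx, rfl⟩

theorem ehr_edgePolytope_friendshipGraph (t : ℕ) :
    ehr (edgePolytope (friendshipGraph n)) t = (latticeRegion n t).ncard := by
  obtain rfl | ht := Nat.eq_zero_or_pos t
  · have hzero : latticeRegion n 0 = {0} := by
      ext p
      simp [latticeRegion, funext_iff, Prod.ext_iff]
    rw [hzero, Set.ncard_singleton, ehr, if_pos rfl]
  · have hpos : (0 : ℝ) < t := by exact_mod_cast ht
    have hiff (x : Fin (n * 2 + 1) → ℤ) : (fun v => (x v : ℝ)) ∈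
        (t : ℝ) • edgePolytope (friendshipGraph n) ↔ x ∈ friendshipRegion n (t : ℤ) := by
      rw [smul_edgePolytope_friendshipGraph hpos, ← intCast_mem_friendshipRegion, Int.cast_natCast]
    rw [ehr, if_neg ht.ne', ← Set.ncard_image_of_injective _ (latticePoint_injective t),
      image_latticePoint_latticeRegion, ← Nat.card_coe_set_eq]
    simp only [hiff]

theorem mk_ehr_edgePolytope_friendshipGraph_mul_one_sub_X_pow :
    (PowerSeries.mk fun t => (ehr (edgePolytope (friendshipGraph n)) t : ℤ)) *
      (1 - PowerSeries.X) ^ (n * 2 + 1) =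
        (((1 + Polynomial.X) ^ n - Polynomial.X : Polynomial ℤ) : PowerSeries ℤ) := by
  let w (p : Fin n → ℕ × ℕ) : ℕ := ∑ i, max (p i).1 (p i).2
  let u (p : Fin n → ℕ × ℕ) : ℕ := ∑ i, ((p i).1 + (p i).2)
  have hw : ∀ m, (w ⁻¹' {m}).Finite :=
    finite_preimage_sum_weight_singleton fun _ => finite_preimage_pair_max_singleton
  have hwu : w ≤ u := fun p => Finset.sum_le_sum fun i _ => max_le_add_of_nonneg
    (Nat.zero_le _) (Nat.zero_le _)
  have hW := mk_ncard_preimage_Iic_sum_mul_one_sub_X_pow (Fin n) finite_preimage_pair_max_singleton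
    weightSeries_pair_max_mul_one_sub_X_sq
  have hU := mk_ncard_preimage_Iic_sum_mul_one_sub_X_pow (Fin n) finite_preimage_pair_add_singleton
    weightSeries_pair_add_mul_one_sub_X_sq
  rw [Fintype.card_fin] at hW hU
  have hehr : (PowerSeries.mk fun t => (ehr (edgePolytope (friendshipGraph n)) t : ℤ)) =
      (PowerSeries.mk fun t => ((w ⁻¹' Set.Iic t).ncard : ℤ)) -
        PowerSeries.X * PowerSeries.mk fun t => ((u ⁻¹' Set.Iic t).ncard : ℤ) := by
    rw [← mk_ncard_preimage_Iio, eq_sub_iff_add_eq]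
    ext t
    simp only [map_add, PowerSeries.coeff_mk, ehr_edgePolytope_friendshipGraph]
    exact_mod_cast ncard_le_and_le_add_ncard_lt hw hwu t
  rw [hehr, sub_mul, hW, mul_assoc, hU]
  simp

end FriendshipGraph

theorem polyDeg_friendship_graph_general {n : ℕ} (hn : 2 ≤ n) :
    polyDeg (edgePolytope (friendshipGraph n)) = n := by
  rw [polyDeg_eq_natDegree polyDim_edgePolytope_friendshipGraph
    mk_ehr_edgePolytope_friendshipGraph_mul_one_sub_X_pow, natDegree_one_add_X_pow_sub_X hn]

/-- The friendship graph `F` on `7` vertices (three triangles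
`{0,1,2}, {0,3,4}, {0,5,6}` sharing the common vertex `0`, with `9` edges) has
`deg(P_F) = 3`. -/
theorem polyDeg_friendship_graph :
    polyDeg (convexHull ℝ (rho ''
      ({s((0 : Fin 7), 1), s((0 : Fin 7), 2), s((1 : Fin 7), 2),
        s((0 : Fin 7), 3), s((0 : Fin 7), 4), s((3 : Fin 7), 4),
        s((0 : Fin 7), 5), s((0 : Fin 7), 6), s((5 : Fin 7), 6)} :
          Set (Sym2 (Fin 7))))) = 3 := by
  simpa only [edgePolytope, edgeSet_friendshipGraph_three] using
    polyDeg_friendship_graph_general (Nat.le_succ 2)
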